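/- (Knight's identity) For every u ∈ (0,1) and all x, y ∈ ℝ, the check function satisfies ρ_u(x − y) − ρ_u(x) = −y·(u − 1{x<0}) + ∫_0^y (1{x ≤ s} − 1{x < 0}) ds, where the integral is the (oriented) integral over the interval from 0 to y. -/

import Mathlib

/-!
The check function is `ρ_u(x) = u x + max (-x) 0`, and only its hinge part is nonlinear. The
function `s ↦ max (s - x) 0` has right derivative `1{x ≤ s}` at every `s`, the kink included, so
`∫_0^y 1{x ≤ s} ds = max (y - x) 0 - max (-x) 0`. This is exactly the change of the hinge part when
`x` is replaced by `x - y`; the two `1{x < 0}` terms of the identity cancel.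
-/

open intervalIntegral

/-- The check (quantile loss) function at level `u`:
`ρ_u(x) = x * (u - 1{x < 0})`. -/
noncomputable def checkFun (u x : ℝ) : ℝ := x * (u - if x < 0 then 1 else 0)

lemma checkFun_eq_mul_add_max (u x : ℝ) : checkFun u x = u * x + max (-x) 0 := by
  unfold checkFun
  split_ifs with hx
  · rw [max_eq_left (by linarith)]
    ring
  · rw [max_eq_right (by linarith)]
    ring

lemma monotone_ite_le {α β : Type*} [Preorder α] [DecidableLE α] [Preorder β] {b c : β}
    (hcb : c ≤ b) (a : α) : Monotone fun s ↦ if a ≤ s then b else c := by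
  intro s t hst
  beta_reduce
  split_ifs with hs ht ht
  · rfl
  · exact absurd (hs.trans hst) ht
  · exact hcb
  · rfl

lemma hasDerivWithinAt_max_sub_zero_Ioi (x s : ℝ) :
    HasDerivWithinAt (fun t ↦ max (t - x) 0) (if x ≤ s then 1 else 0) (Set.Ioi s) s := by
  split_ifs with hxs
  · have hmax : ∀ t, s ≤ t → max (t - x) 0 = t - x := fun t hst ↦
      max_eq_left (sub_nonneg.2 (hxs.trans hst))
    exact ((hasDerivAt_id s).sub_const x).hasDerivWithinAt.congr
      (fun t ht ↦ hmax t (le_of_lt ht)) (hmax s le_rfl)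
  · have hmax : (fun t ↦ max (t - x) 0) =ᶠ[nhds s] fun _ ↦ 0 := by
      filter_upwards [eventually_lt_nhds (not_le.1 hxs)] with t htx
      exact max_eq_right (sub_nonpos.2 htx.le)
    exact ((hasDerivAt_const s 0).congr_of_eventuallyEq hmax).hasDerivWithinAt

lemma intervalIntegrable_ite_le (x a b : ℝ) :
    IntervalIntegrable (fun s ↦ if x ≤ s then (1 : ℝ) else 0) MeasureTheory.volume a b :=
  (monotone_ite_le zero_le_one x).intervalIntegrable

lemma integral_ite_le (x a b : ℝ) :
    ∫ s in a..b, (if x ≤ s then (1 : ℝ) else 0) = max (b - x) 0 - max (a - x) 0 :=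
  integral_eq_sub_of_hasDeriv_right (f := fun t ↦ max (t - x) 0) (by fun_prop)
    (fun s _ ↦ hasDerivWithinAt_max_sub_zero_Ioi x s) (intervalIntegrable_ite_le x a b)

theorem knight_identity_general (u x y : ℝ) :
    checkFun u (x - y) - checkFun u x =
      -y * (u - if x < 0 then 1 else 0) +
        ∫ s in (0 : ℝ)..y,
          ((if x ≤ s then (1 : ℝ) else 0) - if x < 0 then (1 : ℝ) else 0) := by
  have hintegral : ∫ s in (0 : ℝ)..y,
      ((if x ≤ s then (1 : ℝ) else 0) - if x < 0 then (1 : ℝ) else 0) =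
        max (y - x) 0 - max (-x) 0 - y * if x < 0 then 1 else 0 := by
    rw [integral_sub (intervalIntegrable_ite_le x 0 y) intervalIntegrable_const,
      integral_ite_le, integral_const, zero_sub, sub_zero, smul_eq_mul]
  rw [hintegral, checkFun_eq_mul_add_max, checkFun_eq_mul_add_max, neg_sub]
  ring

/-- Knight's identity: for every `u ∈ (0,1)` and all `x, y ∈ ℝ`,
`ρ_u(x - y) - ρ_u(x) = -y * (u - 1{x<0}) + ∫_0^y (1{x ≤ s} - 1{x < 0}) ds`,
where the integral is the oriented integral over the interval from `0` to `y`. -/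
theorem knight_identity (u : ℝ) (hu : u ∈ Set.Ioo (0 : ℝ) 1) (x y : ℝ) :
    checkFun u (x - y) - checkFun u x =
      -y * (u - if x < 0 then 1 else 0) +
        ∫ s in (0 : ℝ)..y,
          ((if x ≤ s then (1 : ℝ) else 0) - if x < 0 then (1 : ℝ) else 0) :=
  knight_identity_general u x y
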